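/- For every integer n with 1 ≤ n ≤ 41, fₙ > 0 if n mod 6 ∈ {1, 2, 3}, and fₙ < 0 if n mod 6 ∈ {4, 5, 0}. -/

import Mathlib

open scoped Classical in
/-- The number of peaks of a permutation of `Fin n` (0-indexed: a peak is an
index `i` with `1 ≤ i ≤ n-2` such that `π (i-1) < π i > π (i+1)`;
this matches the 1-indexed condition `2 ≤ i ≤ n-1` of the paper). -/
noncomputable def numPeaks {n : ℕ} (π : Equiv.Perm (Fin n)) : ℕ :=
  (Finset.univ.filter fun i : Fin n =>
    ∃ (_ : 1 ≤ (i : ℕ)) (h2 : (i : ℕ) + 1 < n),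
      π ⟨(i : ℕ) - 1, Nat.lt_of_le_of_lt (Nat.sub_le _ _) i.isLt⟩ < π i ∧
      π ⟨(i : ℕ) + 1, h2⟩ < π i).card

/-- The peak polynomial `Pₙ(t) = ∑_{π ∈ Sₙ} t^(pk π)`, evaluated at `t : ℝ`. -/
noncomputable def peakPoly (n : ℕ) (t : ℝ) : ℝ :=
  ∑ π : Equiv.Perm (Fin n), t ^ numPeaks π

/-- `fₙ = Pₙ(-1)`. -/
noncomputable def f (n : ℕ) : ℝ := peakPoly n (-1)

/-!
Inserting a new largest letter into a word of length `n` creates a peak, unless it is placed at an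
end, and destroys the peak it is placed next to, if there is one. A word with `k` peaks thus has
`2 * k + 2` insertion positions which keep `k`, and the remaining `n - 1 - 2 * k` raise it to
`k + 1`. Every permutation of `n + 1` letters arises in exactly one way by such an insertion, so
`Pₙ₊₁ = (2 + (n - 1) t) Pₙ + 2 t (1 - t) Pₙ'` for `n ≥ 1`. This recurrence, run on lists of integer
coefficients, makes the `41` signs a finite computation.
-/

open Finset Polynomial

/-- The word obtained from `w` by inserting the letter `M` so that it ends up at position `p`. -/
def insertAt {α : Type*} (w : ℕ → α) (p : ℕ) (M : α) : ℕ → α := fun j =>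
  if j < p then w j else if j = p then M else w (j - 1)

theorem card_eq_below_add_above_add_beside (s : Finset ℕ) (p : ℕ) :
    #s = #{i ∈ s | i + 2 < p} + #{i ∈ s | p ≤ i} + #{i ∈ s | i + 1 = p ∨ i + 2 = p} := by
  rw [← card_union_of_disjoint, ← card_union_of_disjoint]
  · congr 1
    grind
  · grind [disjoint_left]
  · grind [disjoint_left]

section Words

variable {α : Type*} [Preorder α] [DecidableLT α] {n p : ℕ} {w : ℕ → α}

/-- The peaks of the word `w 0, …, w (n - 1)`. A peak is recorded by the position of its left
neighbour, so `i` stands for a peak at position `i + 1`. -/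
def peakSet (n : ℕ) (w : ℕ → α) : Finset ℕ :=
  {i ∈ range (n - 2) | w i < w (i + 1) ∧ w (i + 2) < w (i + 1)}

/-- The positions at which the insertion of a new largest letter leaves the number of peaks of
`w 0, …, w (n - 1)` unchanged: the two ends and the two sides of every peak. -/
def neutralPositions (n : ℕ) (w : ℕ → α) : Finset ℕ :=
  {0, n} ∪ ((peakSet n w).image (· + 1) ∪ (peakSet n w).image (· + 2))

theorem mem_peakSet {i : ℕ} :
    i ∈ peakSet n w ↔ i + 2 < n ∧ w i < w (i + 1) ∧ w (i + 2) < w (i + 1) := by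
  rw [peakSet, mem_filter, mem_range, Nat.lt_sub_iff_add_lt]

theorem peakSet_congr {v : ℕ → α} (h : ∀ j < n, w j = v j) : peakSet n w = peakSet n v := by
  ext i
  simp only [mem_peakSet]
  grind

theorem succ_notMem_peakSet {i : ℕ} (hi : i ∈ peakSet n w) : i + 1 ∉ peakSet n w := fun hi' =>
  lt_asymm (mem_peakSet.1 hi).2.2 (mem_peakSet.1 hi').2.1

theorem mem_neutralPositions :
    p ∈ neutralPositions n w ↔ p = 0 ∨ p = n ∨ ∃ i ∈ peakSet n w, i + 1 = p ∨ i + 2 = p := by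
  simp only [neutralPositions, mem_union, mem_insert, mem_singleton, mem_image]
  grind

theorem neutralPositions_subset_range : neutralPositions n w ⊆ range (n + 1) := by
  intro p hp
  rw [mem_neutralPositions] at hp
  rw [mem_range]
  rcases hp with rfl | rfl | ⟨i, hi, hip⟩
  · omega
  · omega
  · have := (mem_peakSet.1 hi).1
    omega

theorem card_neutralPositions (hn : n ≠ 0) :
    #(neutralPositions n w) = 2 * #(peakSet n w) + 2 := by
  have ends_disjoint :
      Disjoint {0, n} ((peakSet n w).image (· + 1) ∪ (peakSet n w).image (· + 2)) := by
    simp only [disjoint_left, mem_insert, mem_singleton, mem_union, mem_image, mem_peakSet]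
    grind
  have sides_disjoint : Disjoint ((peakSet n w).image (· + 1)) ((peakSet n w).image (· + 2)) := by
    simp only [disjoint_left, mem_image]
    rintro _ ⟨i, hi, rfl⟩ ⟨j, hj, hji⟩
    obtain rfl : i = j + 1 := by omega
    exact succ_notMem_peakSet hj hi
  rw [neutralPositions, card_union_of_disjoint ends_disjoint, card_union_of_disjoint sides_disjoint,
    card_image_of_injective _ (add_left_injective 1),
    card_image_of_injective _ (add_left_injective 2), card_pair hn.symm]
  ring

theorem peakSet_insertAt {M : α} (hM : ∀ j < n, w j < M) (hp : p ≤ n) :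
    peakSet (n + 1) (insertAt w p M) =
      ({i ∈ peakSet n w | i + 2 < p} ∪ {i ∈ peakSet n w | p ≤ i}.image (· + 1)) ∪
        if 0 < p ∧ p < n then {p - 1} else ∅ := by
  ext j
  simp only [mem_union, mem_filter, mem_image, mem_peakSet, insertAt]
  obtain before | after | straddling : j + 2 < p ∨ p < j ∨ j ≤ p ∧ p ≤ j + 2 := by omega
  · grind
  · obtain ⟨i, rfl⟩ : ∃ i, j = i + 1 := ⟨j - 1, by omega⟩
    grind
  · grind

theorem card_peakSet_insertAt_add {M : α} (hM : ∀ j < n, w j < M) (hp : p ≤ n) :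
    #(peakSet (n + 1) (insertAt w p M)) + #{i ∈ peakSet n w | i + 1 = p ∨ i + 2 = p} =
      #(peakSet n w) + if 0 < p ∧ p < n then 1 else 0 := by
  rw [peakSet_insertAt hM hp, card_union_of_disjoint, card_union_of_disjoint,
    card_image_of_injective _ (add_left_injective 1),
    card_eq_below_add_above_add_beside (peakSet n w) p, apply_ite card, card_singleton, card_empty]
  · ring
  · grind [disjoint_left]
  · grind [disjoint_left]

theorem card_peakSet_beside_le_one (p : ℕ) :
    #{i ∈ peakSet n w | i + 1 = p ∨ i + 2 = p} ≤ 1 := by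
  rw [card_le_one_iff]
  grind [succ_notMem_peakSet]

theorem card_peakSet_insertAt {M : α} (hM : ∀ j < n, w j < M) (hp : p ≤ n) :
    #(peakSet (n + 1) (insertAt w p M)) =
      if p ∈ neutralPositions n w then #(peakSet n w) else #(peakSet n w) + 1 := by
  have balance := card_peakSet_insertAt_add hM hp
  by_cases beside : ∃ i ∈ peakSet n w, i + 1 = p ∨ i + 2 = p
  · have one_destroyed : #{i ∈ peakSet n w | i + 1 = p ∨ i + 2 = p} = 1 :=
      (card_peakSet_beside_le_one p).antisymm (card_pos.2 (filter_nonempty_iff.2 beside))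
    have inner : 0 < p ∧ p < n := by
      obtain ⟨i, hi, hip⟩ := beside
      have := (mem_peakSet.1 hi).1
      omega
    rw [if_pos inner] at balance
    rw [if_pos (mem_neutralPositions.2 (.inr (.inr beside)))]
    omega
  · have none_destroyed : #{i ∈ peakSet n w | i + 1 = p ∨ i + 2 = p} = 0 :=
      card_eq_zero.2 (filter_eq_empty_iff.2 fun i hi hip => beside ⟨i, hi, hip⟩)
    have neutral_iff : p ∈ neutralPositions n w ↔ ¬ (0 < p ∧ p < n) := by
      rw [mem_neutralPositions, or_iff_left beside]
      omega
    simp only [neutral_iff, ite_not]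
    split_ifs at balance ⊢ <;> omega

theorem sum_card_peakSet_insertAt {R : Type*} [CommRing R] (g : ℕ → R) {M : α} (hn : n ≠ 0)
    (hM : ∀ j < n, w j < M) :
    ∑ p ∈ range (n + 1), g #(peakSet (n + 1) (insertAt w p M)) =
      (2 * #(peakSet n w) + 2) * g #(peakSet n w) +
        (n - 1 - 2 * #(peakSet n w)) * g (#(peakSet n w) + 1) := by
  have hsub : neutralPositions n w ⊆ range (n + 1) := neutralPositions_subset_range
  have hcard := card_neutralPositions (w := w) hn
  have value_on_neutral : ∀ p ∈ neutralPositions n w,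
      g #(peakSet (n + 1) (insertAt w p M)) = g #(peakSet n w) := fun p hp => by
    rw [card_peakSet_insertAt hM (mem_range_succ_iff.1 (hsub hp)), if_pos hp]
  have value_off_neutral : ∀ p ∈ range (n + 1) \ neutralPositions n w,
      g #(peakSet (n + 1) (insertAt w p M)) = g (#(peakSet n w) + 1) := fun p hp => by
    obtain ⟨hpn, hp⟩ := mem_sdiff.1 hp
    rw [card_peakSet_insertAt hM (mem_range_succ_iff.1 hpn), if_neg hp]
  rw [← sum_sdiff hsub, sum_congr rfl value_on_neutral, sum_congr rfl value_off_neutral,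
    sum_const, sum_const, card_sdiff_of_subset hsub, nsmul_eq_mul, nsmul_eq_mul,
    Nat.cast_sub (card_le_card hsub), hcard, card_range]
  push_cast
  ring

end Words

section Permutations

variable {n : ℕ}

/-- The one-line notation of `π`, continued by the junk value `0` from position `n` on. -/
def permWord (π : Equiv.Perm (Fin n)) : ℕ → ℕ := fun i =>
  if h : i < n then (π ⟨i, h⟩ : ℕ) else 0

/-- The permutation whose one-line notation is that of `π` with the new largest letter inserted at
position `p`. -/
def insertLast (π : Equiv.Perm (Fin n)) (p : Fin (n + 1)) : Equiv.Perm (Fin (n + 1)) :=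
  (finSuccEquiv' p).trans (π.optionCongr.trans (finSuccEquiv' (Fin.last n)).symm)

theorem permWord_of_lt (π : Equiv.Perm (Fin n)) {i : ℕ} (hi : i < n) :
    permWord π i = π ⟨i, hi⟩ :=
  dif_pos hi

theorem numPeaks_eq_card_peakSet (π : Equiv.Perm (Fin n)) :
    numPeaks π = #(peakSet n (permWord π)) := by
  refine card_bij (fun i _ => (i : ℕ) - 1) ?_ ?_ ?_
  · rintro ⟨_ | k, hk⟩ hi
    · simp at hi
    · obtain ⟨_, h_lt, h_left, h_right⟩ := (mem_filter.1 hi).2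
      grind [mem_peakSet, permWord]
  · intro i hi j hj hij
    have := (mem_filter.1 hi).2.1
    have := (mem_filter.1 hj).2.1
    omega
  · intro i hi
    obtain ⟨h_lt, h_left, h_right⟩ := mem_peakSet.1 hi
    refine ⟨⟨i + 1, by omega⟩, mem_filter.2 ⟨mem_univ _, by simp, h_lt, ?_⟩, rfl⟩
    grind [permWord]

theorem insertLast_apply_self (π : Equiv.Perm (Fin n)) (p : Fin (n + 1)) :
    insertLast π p p = Fin.last n := by
  simp [insertLast]

theorem insertLast_apply_succAbove (π : Equiv.Perm (Fin n)) (p : Fin (n + 1)) (i : Fin n) :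
    insertLast π p (p.succAbove i) = (π i).castSucc := by
  simp [insertLast]

theorem insertLast_bijective :
    Function.Bijective fun x : Equiv.Perm (Fin n) × Fin (n + 1) => insertLast x.1 x.2 := by
  rw [Fintype.bijective_iff_injective_and_card]
  constructor
  · rintro ⟨π, p⟩ ⟨ρ, q⟩ (h : insertLast π p = insertLast ρ q)
    obtain rfl : p = q := (insertLast ρ q).injective <| by
      rw [insertLast_apply_self, ← h, insertLast_apply_self]
    have same_letters : π = ρ := Equiv.ext fun i => Fin.castSucc_injective n <| by
      rw [← insertLast_apply_succAbove, h, insertLast_apply_succAbove]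
    rw [same_letters]
  · simp [Fintype.card_perm, Nat.factorial_succ, mul_comm]

theorem permWord_insertLast (π : Equiv.Perm (Fin n)) (p : Fin (n + 1)) {j : ℕ} (hj : j < n + 1) :
    permWord (insertLast π p) j = insertAt (permWord π) p n j := by
  rw [permWord_of_lt _ hj]
  rcases Fin.eq_self_or_eq_succAbove p ⟨j, hj⟩ with hjp | ⟨i, hji⟩
  · obtain rfl : p = ⟨j, hj⟩ := hjp.symm
    simp [insertLast_apply_self, insertAt]
  · rw [hji, insertLast_apply_succAbove]
    rw [Fin.ext_iff] at hji
    rcases lt_or_ge i.castSucc p with hip | hip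
    · rw [Fin.succAbove_of_castSucc_lt p i hip] at hji
      grind [permWord, insertAt]
    · rw [Fin.succAbove_of_le_castSucc p i hip] at hji
      grind [permWord, insertAt]

theorem sum_numPeaks_succ {R : Type*} [CommRing R] (g : ℕ → R) (hn : n ≠ 0) :
    ∑ σ : Equiv.Perm (Fin (n + 1)), g (numPeaks σ) =
      ∑ π : Equiv.Perm (Fin n), ((2 * numPeaks π + 2) * g (numPeaks π) +
        (n - 1 - 2 * numPeaks π) * g (numPeaks π + 1)) := by
  rw [← insertLast_bijective.sum_comp fun σ => g (numPeaks σ), Fintype.sum_prod_type]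
  refine sum_congr rfl fun π _ => ?_
  have letters_lt : ∀ j < n, permWord π j < n := fun j hj => by
    rw [permWord_of_lt π hj]
    exact Fin.isLt _
  rw [numPeaks_eq_card_peakSet π, ← sum_card_peakSet_insertAt g hn letters_lt, sum_range]
  refine sum_congr rfl fun p _ => ?_
  rw [numPeaks_eq_card_peakSet, peakSet_congr fun j hj => permWord_insertLast π p hj]

end Permutations

section PeakPolynomial

/-- The peak polynomial as a formal polynomial, so that it can be differentiated and computed with
exactly. -/
noncomputable def peakPolynomial (n : ℕ) : ℤ[X] :=
  ∑ π : Equiv.Perm (Fin n), X ^ numPeaks π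

theorem peakPoly_eq_aeval (n : ℕ) (t : ℝ) : peakPoly n t = aeval t (peakPolynomial n) := by
  simp [peakPoly, peakPolynomial]

theorem peakPolynomial_one : peakPolynomial 1 = 1 := by
  have no_peaks (π : Equiv.Perm (Fin 1)) : numPeaks π = 0 := by
    rw [numPeaks_eq_card_peakSet, card_eq_zero, eq_empty_iff_forall_notMem]
    intro i hi
    have := (mem_peakSet.1 hi).1
    omega
  simp [peakPolynomial, no_peaks]

theorem peakPolynomial_succ {n : ℕ} (hn : n ≠ 0) :
    peakPolynomial (n + 1) =
      (2 + ((n : ℤ[X]) - 1) * X) * peakPolynomial n +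
        2 * X * (1 - X) * derivative (peakPolynomial n) := by
  simp only [peakPolynomial, derivative_sum, mul_sum, ← sum_add_distrib]
  rw [sum_numPeaks_succ (X ^ ·) hn]
  refine sum_congr rfl fun π _ => ?_
  cases numPeaks π with
  | zero => simp
  | succ k =>
    simp only [Nat.cast_add, Nat.cast_one, derivative_X_pow_succ, eq_intCast, Int.cast_add,
      Int.cast_natCast, Int.cast_one]
    ring

end PeakPolynomial

section Computation

variable {R : Type*} [CommRing R]

/-- The polynomial with the given list of coefficients, constant coefficient first. -/
noncomputable def ofCoeffs : List R → R[X]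
  | [] => 0
  | a :: l => C a + X * ofCoeffs l

/-- The coefficients of `c + (a + b X) p + 2 X (1 - X) p'`, for `p` given by its coefficients. -/
def recurrenceStep (a b c : R) : List R → List R
  | [] => [c]
  | x :: l => (a * x + c) :: recurrenceStep (a + 2) (b - 2) (b * x) l

/-- The coefficients of `peakPolynomial (n + 1)`, padded with zeros. -/
def peakCoeffs : ℕ → List ℤ
  | 0 => [1]
  | n + 1 => recurrenceStep 2 n 0 (peakCoeffs n)

theorem ofCoeffs_recurrenceStep (a b c : R) (l : List R) :
    ofCoeffs (recurrenceStep a b c l) =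
      C c + (C a + C b * X) * ofCoeffs l + 2 * X * (1 - X) * derivative (ofCoeffs l) := by
  induction l generalizing a b c with
  | nil => simp [recurrenceStep, ofCoeffs]
  | cons x l ih =>
    simp only [recurrenceStep, ofCoeffs, ih, derivative_mul, derivative_X, derivative_C, map_add,
      map_sub, map_mul, map_ofNat]
    ring

theorem eval_ofCoeffs_neg_one (l : List R) : (ofCoeffs l).eval (-1) = l.alternatingSum := by
  induction l with
  | nil => simp [ofCoeffs]
  | cons a l ih => simp [ofCoeffs, ih, sub_eq_add_neg]

theorem peakPolynomial_succ_eq_ofCoeffs (n : ℕ) :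
    peakPolynomial (n + 1) = ofCoeffs (peakCoeffs n) := by
  induction n with
  | zero => simp [peakPolynomial_one, peakCoeffs, ofCoeffs]
  | succ n ih =>
    rw [peakPolynomial_succ n.succ_ne_zero, ih, peakCoeffs, ofCoeffs_recurrenceStep]
    simp

theorem f_succ_eq_alternatingSum (n : ℕ) : f (n + 1) = (peakCoeffs n).alternatingSum := by
  rw [f, peakPoly_eq_aeval, peakPolynomial_succ_eq_ofCoeffs, ← eval_ofCoeffs_neg_one]
  simpa using aeval_algebraMap_apply ℝ (-1 : ℤ) (ofCoeffs (peakCoeffs n))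

theorem alternatingSum_peakCoeffs_sign : ∀ n < 41,
    (((n + 1) % 6 = 1 ∨ (n + 1) % 6 = 2 ∨ (n + 1) % 6 = 3) →
      0 < (peakCoeffs n).alternatingSum) ∧
    (((n + 1) % 6 = 4 ∨ (n + 1) % 6 = 5 ∨ (n + 1) % 6 = 0) →
      (peakCoeffs n).alternatingSum < 0) := by
  decide +kernel

end Computation

/-- For `1 ≤ n ≤ 41`, `fₙ > 0` if `n mod 6 ∈ {1,2,3}` and `fₙ < 0` if
`n mod 6 ∈ {4,5,0}`. -/
theorem f_sign_pattern_up_to_41 :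
    ∀ n : ℕ, 1 ≤ n → n ≤ 41 →
      ((n % 6 = 1 ∨ n % 6 = 2 ∨ n % 6 = 3) → 0 < f n) ∧
      ((n % 6 = 4 ∨ n % 6 = 5 ∨ n % 6 = 0) → f n < 0) := by
  intro n hn hn'
  obtain ⟨m, rfl⟩ : ∃ m, n = m + 1 := ⟨n - 1, by omega⟩
  rw [f_succ_eq_alternatingSum, Int.cast_pos, Int.cast_lt_zero]
  exact alternatingSum_peakCoeffs_sign m (by omega)
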